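/- arXiv:2509.03197 — 2 statements merged into one kernel-verified Lean document; each statement's English description precedes it below -/
import Mathlib

section
/- Let n ≥ 1, let U ⊆ ℝⁿ be an open connected set, let T := {z ∈ ℂⁿ : (Re z₁,…,Re zₙ) ∈ U} and T′ := {z ∈ ℂⁿ : (Re z₁,…,Re zₙ) ∈ convexHull(U)}. Let g and h be holomorphic functions on T′. If |g(z)| ≤ |h(z)| and h(z) ≠ 0 for every z ∈ T, then |g(z)| ≤ |h(z)| for every z ∈ T′. -/
/-!
If a holomorphic function on the tube over `convexHull ℝ U` has no zeros over `U`, then it has no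
zeros at all. Hence `h` is zero-free, and if `‖h z₀‖ < ‖g z₀‖` then `(g z₀ / h z₀) • h - g`, which
has no zeros over `U` but vanishes at `z₀`, gives a contradiction.

Zero-freeness of `F` over two sides of a triangle in the base propagates to its interior, which is
swept out by a family of analytic discs with boundaries over the two sides. At the first parameter
whose disc carries a zero, the maximum principle bounds `1 / F` on all earlier discs by its
maximum over the two sides, and this bound survives in the limit, a contradiction.

Hence, if `P` is the component containing `U` of the interior of the zero-free part of the base and
two sides of a triangle lie in `P`, so does the third. A connected open set with this property is
convex, so `P` contains the convex hull of `U`.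
-/

open Set Filter Topology

section ContinuityPrinciple

variable {V : Type*} [NormedAddCommGroup V] [NormedSpace ℂ V] [Nontrivial V]
  {Ω : Set (ℝ × V)} {G : ℝ × V → ℂ}

theorem norm_inv_le_of_forall_mem_frontier_norm_inv_le (hcomp : IsCompact (closure Ω))
    (hcont : ContinuousOn G (closure Ω)) {c : ℝ}
    (hhol : DifferentiableOn ℂ (fun w => G (c, w)) {w | (c, w) ∈ Ω})
    (hne : ∀ w, (c, w) ∈ closure Ω → G (c, w) ≠ 0) {C : ℝ}
    (hC : ∀ w, (c, w) ∈ frontier Ω → ‖(G (c, w))⁻¹‖ ≤ C) {w : V} (hw : (c, w) ∈ Ω) :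
    ‖(G (c, w))⁻¹‖ ≤ C := by
  have hslice : Continuous fun w : V => (c, w) := Continuous.prodMk_right c
  have hclosure : closure {w | (c, w) ∈ Ω} ⊆ {w | (c, w) ∈ closure Ω} :=
    hslice.closure_preimage_subset Ω
  have hbdd : Bornology.IsBounded {w | (c, w) ∈ Ω} :=
    (hcomp.image continuous_snd).isBounded.subset fun w hw => ⟨(c, w), subset_closure hw, rfl⟩
  have hdiff : DiffContOnCl ℂ (fun w => G (c, w)) {w | (c, w) ∈ Ω} :=
    ⟨hhol, hcont.comp hslice.continuousOn hclosure⟩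
  exact Complex.norm_le_of_forall_mem_frontier_norm_le hbdd
    (hdiff.inv fun w hw => hne w (hclosure hw))
    (fun w hw => hC w (hslice.frontier_preimage_subset Ω hw)) (subset_closure hw)

theorem ne_zero_of_forall_mem_frontier_ne_zero (hΩ : IsOpen Ω) (hcomp : IsCompact (closure Ω))
    (hcont : ContinuousOn G (closure Ω))
    (hhol : ∀ c, DifferentiableOn ℂ (fun w => G (c, w)) {w | (c, w) ∈ Ω}) {q₀ : ℝ × V}
    (hq₀ : q₀ ∈ Ω) (hne : ∀ q ∈ frontier Ω, q.1 ≤ q₀.1 → G q ≠ 0) : G q₀ ≠ 0 := by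
  intro hzero
  have hleft : IsClosed {q : ℝ × V | q.1 ≤ q₀.1} := isClosed_le continuous_fst continuous_const
  have hzeros : IsCompact ((closure Ω ∩ {q | q.1 ≤ q₀.1}) ∩ G ⁻¹' {0}) := by
    have hK := hcomp.inter_right hleft
    exact hK.of_isClosed_subset ((hcont.mono inter_subset_left).preimage_isClosed_of_isClosed
      hK.isClosed isClosed_singleton) inter_subset_left
  obtain ⟨⟨c₁, ζ⟩, ⟨⟨hcl, hc₁⟩, hGζ : G (c₁, ζ) = 0⟩, hmin⟩ := hzeros.exists_isMinOn
    ⟨q₀, ⟨subset_closure hq₀, le_refl q₀.1⟩, hzero⟩ continuous_fst.continuousOn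
  have hζ : (c₁, ζ) ∈ Ω := by
    by_contra hnot
    exact hne _ (hΩ.frontier_eq ▸ ⟨hcl, hnot⟩) hc₁ hGζ
  have hfrontier : IsCompact (frontier Ω ∩ {q | q.1 ≤ q₀.1}) :=
    (hcomp.of_isClosed_subset isClosed_frontier frontier_subset_closure).inter_right hleft
  obtain ⟨C, hC⟩ := hfrontier.exists_bound_of_continuousOn (f := fun q => (G q)⁻¹)
    ((hcont.mono (inter_subset_left.trans frontier_subset_closure)).inv₀
      fun q hq => hne q hq.1 hq.2)
  have hearlier : ∀ c < c₁, (c, ζ) ∈ Ω → 1 ≤ C * ‖G (c, ζ)‖ := by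
    intro c hc hcζ
    have hzfree : ∀ w, (c, w) ∈ closure Ω → G (c, w) ≠ 0 := fun w hw h0 =>
      hc.not_ge (hmin ⟨⟨hw, hc.le.trans hc₁⟩, h0⟩)
    have hbound := norm_inv_le_of_forall_mem_frontier_norm_inv_le hcomp hcont (hhol c) hzfree
      (fun w hw => hC _ ⟨hw, hc.le.trans hc₁⟩) hcζ
    rwa [norm_inv, inv_le_iff_one_le_mul₀ (norm_pos_iff.2 (hzfree ζ (subset_closure hcζ)))]
      at hbound
  have hline : ContinuousAt (fun c : ℝ => (c, ζ)) c₁ := by fun_prop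
  have hGline : ContinuousAt (fun c => G (c, ζ)) c₁ :=
    (hcont.continuousAt (mem_of_superset (hΩ.mem_nhds hζ) subset_closure)).comp
      (f := fun c : ℝ => (c, ζ)) hline
  have hlim : 1 ≤ C * ‖G (c₁, ζ)‖ := by
    refine ge_of_tendsto ((hGline.norm.const_mul C).mono_left (nhdsWithin_le_nhds (s := Iio c₁))) ?_
    filter_upwards [nhdsWithin_le_nhds (hline (hΩ.mem_nhds hζ)), self_mem_nhdsWithin] with c hcζ hc
    exact hearlier c hc hcζ
  norm_num [hGζ] at hlim

end ContinuityPrinciple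

section TriangleTube

/-- The tube in `ℂ²` over the closed triangle with vertices `(0, 0)`, `(1, 0)` and `(0, 1)`. -/
def triangleTube : Set (ℂ × ℂ) :=
  {p | 0 ≤ p.1.re ∧ 0 ≤ p.2.re ∧ p.1.re + p.2.re ≤ 1}

/-- The family of analytic discs sweeping out `triangleTube`: the disc with parameter `c` is the
curve `s + t = c + ε (w² - 1)`, `s - t = w` in the coordinates `(s, t)`. -/
noncomputable def parabolicDisc (ε : ℝ) (q : ℝ × ℂ) : ℂ × ℂ :=
  ((q.1 + ε * (q.2 ^ 2 - 1) + q.2) / 2, (q.1 + ε * (q.2 ^ 2 - 1) - q.2) / 2)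

/-- The parameters `(c, w)` at which `parabolicDisc ε` lies over the open triangle. The condition
`|Re w| < 1` discards the part where the parabola, being convex, re-enters the quadrant. -/
def parabolicDomain (ε : ℝ) : Set (ℝ × ℂ) :=
  {q | q.1 < 1 ∧ |q.2.re| < 1 ∧ 0 < (parabolicDisc ε q).1.re ∧ 0 < (parabolicDisc ε q).2.re}

variable {ε : ℝ}

theorem parabolicDisc_fst_re (ε : ℝ) (q : ℝ × ℂ) : (parabolicDisc ε q).1.re =
    (q.1 + ε * (q.2.re ^ 2 - q.2.im ^ 2 - 1) + q.2.re) / 2 := by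
  simp [parabolicDisc, pow_two]

theorem parabolicDisc_snd_re (ε : ℝ) (q : ℝ × ℂ) : (parabolicDisc ε q).2.re =
    (q.1 + ε * (q.2.re ^ 2 - q.2.im ^ 2 - 1) - q.2.re) / 2 := by
  simp [parabolicDisc, pow_two]

@[fun_prop]
theorem continuous_parabolicDisc (ε : ℝ) : Continuous (parabolicDisc ε) := by
  unfold parabolicDisc
  fun_prop

theorem differentiable_parabolicDisc (ε c : ℝ) :
    Differentiable ℂ fun w => parabolicDisc ε (c, w) := by
  simp only [parabolicDisc]
  fun_prop

theorem parabolicDisc_re_add_re_add_le (hε : 0 ≤ ε) {q : ℝ × ℂ} (hq : |q.2.re| ≤ 1) :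
    (parabolicDisc ε q).1.re + (parabolicDisc ε q).2.re + ε * q.2.im ^ 2 ≤ q.1 := by
  have hdefect : 0 ≤ ε * (1 - q.2.re ^ 2) :=
    mul_nonneg hε (sub_nonneg.2 ((sq_le_one_iff_abs_le_one _).2 hq))
  rw [parabolicDisc_fst_re, parabolicDisc_snd_re]
  linarith

theorem isOpen_parabolicDomain (ε : ℝ) : IsOpen (parabolicDomain ε) := by
  simp only [parabolicDomain, ofPred_and]
  refine IsOpen.inter ?_ (IsOpen.inter ?_ (IsOpen.inter ?_ ?_)) <;>
    exact isOpen_lt (by fun_prop) (by fun_prop)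

theorem closure_parabolicDomain_subset (ε : ℝ) : closure (parabolicDomain ε) ⊆
    {q | q.1 ≤ 1 ∧ |q.2.re| ≤ 1 ∧ 0 ≤ (parabolicDisc ε q).1.re ∧ 0 ≤ (parabolicDisc ε q).2.re} := by
  refine closure_minimal (fun q hq => ⟨hq.1.le, hq.2.1.le, hq.2.2.1.le, hq.2.2.2.le⟩) ?_
  simp only [ofPred_and]
  refine IsClosed.inter ?_ (IsClosed.inter ?_ (IsClosed.inter ?_ ?_)) <;>
    exact isClosed_le (by fun_prop) (by fun_prop)

theorem mapsTo_parabolicDisc_closure (hε : 0 ≤ ε) :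
    MapsTo (parabolicDisc ε) (closure (parabolicDomain ε)) triangleTube := by
  intro q hq
  obtain ⟨hc, hw, hs, ht⟩ := closure_parabolicDomain_subset ε hq
  have hsum := parabolicDisc_re_add_re_add_le hε hw
  have him : 0 ≤ ε * q.2.im ^ 2 := by positivity
  exact ⟨hs, ht, by linarith⟩

theorem isCompact_closure_parabolicDomain (hε : 0 < ε) :
    IsCompact (closure (parabolicDomain ε)) := by
  have hbox : IsCompact (Icc (0 : ℝ) 1 ×ˢ (Icc (-1) 1 ×ℂ Icc (-√(1 / ε)) √(1 / ε))) :=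
    isCompact_Icc.prod (isCompact_Icc.reProdIm isCompact_Icc)
  refine hbox.of_isClosed_subset isClosed_closure ?_
  intro q hq
  obtain ⟨hc, hw, hs, ht⟩ := closure_parabolicDomain_subset ε hq
  have hsum := parabolicDisc_re_add_re_add_le hε.le hw
  have him : 0 ≤ ε * q.2.im ^ 2 := by positivity
  have him_sq : q.2.im ^ 2 ≤ 1 / ε := by rw [le_div_iff₀' hε]; linarith
  exact ⟨⟨by linarith, hc⟩, abs_le.1 hw, abs_le.1 (Real.abs_le_sqrt him_sq)⟩

theorem re_eq_zero_of_mem_frontier_parabolicDomain (hε : 0 ≤ ε) {q : ℝ × ℂ}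
    (hq : q ∈ frontier (parabolicDomain ε)) (hc : q.1 < 1) :
    (parabolicDisc ε q).1.re = 0 ∨ (parabolicDisc ε q).2.re = 0 := by
  rw [(isOpen_parabolicDomain ε).frontier_eq] at hq
  obtain ⟨-, hw, hs, ht⟩ := closure_parabolicDomain_subset ε hq.1
  by_contra! hne
  refine hq.2 ⟨hc, ?_, hs.lt_of_ne' hne.1, ht.lt_of_ne' hne.2⟩
  have hsum := parabolicDisc_re_add_re_add_le hε hw
  have him : 0 ≤ ε * q.2.im ^ 2 := by positivity
  rw [parabolicDisc_fst_re] at hs hsum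
  rw [parabolicDisc_snd_re] at ht hsum
  rw [abs_lt]
  constructor <;> linarith

theorem exists_parabolicDisc_eq {s t : ℝ} (hs : 0 < s) (ht : 0 < t) (hst : s + t < 1) :
    ∃ ε > 0, ∃ q ∈ parabolicDomain ε, parabolicDisc ε q = (↑s, ↑t) := by
  obtain ⟨ε, hε, hεst⟩ : ∃ ε > 0, s + t + ε < 1 := ⟨(1 - (s + t)) / 2, by linarith, by linarith⟩
  have hdisc : parabolicDisc ε (s + t + ε * (1 - (s - t) ^ 2), ↑(s - t)) = (↑s, ↑t) := by
    simp only [parabolicDisc]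
    push_cast
    ext <;> ring
  have hsq : 0 ≤ ε * (s - t) ^ 2 := by positivity
  refine ⟨ε, hε, _, ⟨?_, ?_, ?_, ?_⟩, hdisc⟩
  · linarith
  · rw [Complex.ofReal_re, abs_lt]
    constructor <;> linarith
  · simpa only [hdisc, Complex.ofReal_re] using hs
  · simpa only [hdisc, Complex.ofReal_re] using ht

theorem ne_zero_of_ne_zero_on_legs {F : ℂ × ℂ → ℂ} (hF : DifferentiableOn ℂ F triangleTube)
    (hne : ∀ p ∈ triangleTube, p.1.re = 0 ∨ p.2.re = 0 → F p ≠ 0) {s t : ℝ} (hs : 0 ≤ s)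
    (ht : 0 ≤ t) (hst : s + t < 1) : F (↑s, ↑t) ≠ 0 := by
  rcases hs.eq_or_lt' with hs | hs
  · exact hne _ ⟨hs.ge, ht, hst.le⟩ (Or.inl hs)
  rcases ht.eq_or_lt' with ht | ht
  · exact hne _ ⟨hs.le, ht.ge, hst.le⟩ (Or.inr ht)
  obtain ⟨ε, hε, q, hq, hdisc⟩ := exists_parabolicDisc_eq hs ht hst
  have hmaps := mapsTo_parabolicDisc_closure hε.le
  rw [← hdisc]
  refine ne_zero_of_forall_mem_frontier_ne_zero (G := F ∘ parabolicDisc ε)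
    (isOpen_parabolicDomain ε) (isCompact_closure_parabolicDomain hε)
    (hF.continuousOn.comp (continuous_parabolicDisc ε).continuousOn hmaps) (fun c => ?_) hq
    fun r hr hrq => hne _ (hmaps (frontier_subset_closure hr))
      (re_eq_zero_of_mem_frontier_parabolicDomain hε.le hr (hrq.trans_lt hq.1))
  exact hF.comp (differentiable_parabolicDisc ε c).differentiableOn
    fun w hw => hmaps (subset_closure hw)

end TriangleTube

section Segments

variable {E : Type*} [AddCommGroup E] [Module ℝ E] [TopologicalSpace E] [IsTopologicalAddGroup E]
  [ContinuousSMul ℝ E] {P : Set E}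

theorem isOpen_setOf_segment_subset (hP : IsOpen P) :
    IsOpen {p : E × E | segment ℝ p.1 p.2 ⊆ P} := by
  rw [isOpen_iff_eventually]
  intro p hp
  simp only [segment_eq_image', image_subset_iff] at hp ⊢
  refine isCompact_Icc.eventually_forall_of_forall_eventually fun θ hθ => ?_
  have hcont : Continuous fun r : (E × E) × ℝ => r.1.1 + r.2 • (r.1.2 - r.1.1) := by fun_prop
  exact hcont.continuousAt (hP.mem_nhds (hp hθ))

theorem convex_of_forall_segment_subset (hP : IsOpen P) (hconn : IsPreconnected P)
    (hstep : ∀ a b c, segment ℝ b a ⊆ P → segment ℝ b c ⊆ P → segment ℝ a c ⊆ P) :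
    Convex ℝ P := by
  refine convex_iff_segment_subset.2 fun a ha => ?_
  have hopen : IsOpen {x | segment ℝ a x ⊆ P} :=
    (isOpen_setOf_segment_subset hP).preimage (Continuous.prodMk_right a)
  have hrefl : segment ℝ a a ⊆ P := by simpa using ha
  refine hconn.subset_of_closure_inter_subset hopen ⟨a, ha, hrefl⟩ ?_
  rintro x ⟨hxcl, hxP⟩
  have hnear : {y | segment ℝ y x ⊆ P} ∈ 𝓝 x :=
    ((isOpen_setOf_segment_subset hP).preimage (Continuous.prodMk_left x)).mem_nhds
      (by simpa using hxP)
  obtain ⟨y, hyx, hay⟩ := mem_closure_iff_nhds.1 hxcl _ hnear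
  exact hstep a y x (segment_symm ℝ a y ▸ hay) hyx

end Segments

section TubeDomains

variable {Z : Type*} [NormedAddCommGroup Z] [NormedSpace ℂ Z]

/-- A real-linear map `re : Z → E` on a complex vector space behaves like a real part if every
`x : E` has a *real lift*: a `w` with real part `x` such that `I • w` has real part `0`. The tube
over `U : Set E` is then `re ⁻¹' U`. -/
def IsRealPart {E : Type*} [AddCommGroup E] [Module ℝ E] (re : Z →ₗ[ℝ] E) : Prop :=
  ∀ x, ∃ w, re w = x ∧ re (Complex.I • w) = 0

/-- The points of `Q` over which the function `H` has no zeros. -/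
def zeroFreeBase {E : Type*} [AddCommGroup E] [Module ℝ E] (re : Z →ₗ[ℝ] E) (H : Z → ℂ)
    (Q : Set E) : Set E :=
  {x ∈ Q | ∀ z, re z = x → H z ≠ 0}

section Algebraic

variable {E : Type*} [AddCommGroup E] [Module ℝ E] {re : Z →ₗ[ℝ] E} {H : Z → ℂ} {Q : Set E}

theorem re_smul_of_re_I_smul_eq_zero {w : Z} (hw : re (Complex.I • w) = 0) (μ : ℂ) :
    re (μ • w) = μ.re • re w := by
  have hμ : μ • w = μ.re • w + μ.im • Complex.I • w := by
    conv_lhs => rw [← Complex.re_add_im μ, add_smul, mul_smul, Complex.coe_smul, Complex.coe_smul]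
  rw [hμ, map_add, map_smul, map_smul, hw, smul_zero, add_zero]

theorem add_smul_sub_add_smul_sub_mem (hQ : Convex ℝ Q) {a b c : E} (ha : a ∈ Q) (hb : b ∈ Q)
    (hc : c ∈ Q) {s t : ℝ} (hs : 0 ≤ s) (ht : 0 ≤ t) (hst : s + t ≤ 1) :
    b + s • (a - b) + t • (c - b) ∈ Q := by
  have hmem := hQ.sum_mem (t := Finset.univ) (w := ![1 - s - t, s, t]) (z := ![b, a, c])
    (by simp [Fin.forall_fin_succ, hs, ht]; linarith) (by simp [Fin.sum_univ_three]; ring)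
    (by simp [Fin.forall_fin_succ, ha, hb, hc])
  convert hmem using 1
  simp only [Fin.sum_univ_three, Matrix.cons_val]
  module

theorem add_smul_sub_add_smul_sub_mem_zeroFreeBase (hre : IsRealPart re) (hQ : Convex ℝ Q)
    (hH : DifferentiableOn ℂ H (re ⁻¹' Q)) {a b c : E} (hba : segment ℝ b a ⊆ zeroFreeBase re H Q)
    (hbc : segment ℝ b c ⊆ zeroFreeBase re H Q) {s t : ℝ} (hs : 0 ≤ s) (ht : 0 ≤ t)
    (hst : s + t < 1) : b + s • (a - b) + t • (c - b) ∈ zeroFreeBase re H Q := by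
  have hmem {σ τ : ℝ} : 0 ≤ σ → 0 ≤ τ → σ + τ ≤ 1 → b + σ • (a - b) + τ • (c - b) ∈ Q :=
    add_smul_sub_add_smul_sub_mem hQ (hba (right_mem_segment ℝ b a)).1
      (hba (left_mem_segment ℝ b a)).1 (hbc (right_mem_segment ℝ b c)).1
  refine ⟨hmem hs ht hst.le, fun z hz => ?_⟩
  obtain ⟨α, hα, hIα⟩ := hre (a - b)
  obtain ⟨γ, hγ, hIγ⟩ := hre (c - b)
  let Φ : ℂ × ℂ → Z := fun p => z + (p.1 - s) • α + (p.2 - t) • γ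
  have hΦre (p) : re (Φ p) = b + p.1.re • (a - b) + p.2.re • (c - b) := by
    simp only [Φ, map_add, re_smul_of_re_I_smul_eq_zero hIα, re_smul_of_re_I_smul_eq_zero hIγ, hz,
      hα, hγ, Complex.sub_re, Complex.ofReal_re]
    module
  have hΦdiff : Differentiable ℂ Φ := by fun_prop
  have hΦmaps : MapsTo Φ triangleTube (re ⁻¹' Q) := fun p hp => by
    rw [mem_preimage, hΦre]
    exact hmem hp.1 hp.2.1 hp.2.2
  have hΦz : Φ (↑s, ↑t) = z := by simp [Φ]
  rw [← hΦz]
  refine ne_zero_of_ne_zero_on_legs (F := H ∘ Φ) (hH.comp hΦdiff.differentiableOn hΦmaps) ?_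
    hs ht hst
  rintro p ⟨hp₁, hp₂, hp⟩ (h0 | h0)
  · refine (hbc ?_).2 _ (hΦre p)
    rw [segment_eq_image']
    exact ⟨p.2.re, ⟨hp₂, by linarith⟩, by simp [h0]⟩
  · refine (hba ?_).2 _ (hΦre p)
    rw [segment_eq_image']
    exact ⟨p.1.re, ⟨hp₁, by linarith⟩, by simp [h0]⟩

end Algebraic

section Topological

variable {E : Type*} [AddCommGroup E] [Module ℝ E] [TopologicalSpace E] [IsTopologicalAddGroup E]
  [ContinuousSMul ℝ E] {re : Z →ₗ[ℝ] E} {H : Z → ℂ} {Q P : Set E}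

theorem segment_subset_zeroFreeBase (hre : IsRealPart re) (hQ : Convex ℝ Q)
    (hH : DifferentiableOn ℂ H (re ⁻¹' Q)) (hP : IsOpen P) (hPQ : P ⊆ zeroFreeBase re H Q)
    {a b c : E} (hba : segment ℝ b a ⊆ P) (hbc : segment ℝ b c ⊆ P) :
    segment ℝ a c ⊆ zeroFreeBase re H Q := by
  -- Enlarging the triangle slightly puts its third side into the interior of a triangle.
  have henlarge {y : E} (hy : segment ℝ b y ⊆ P) :
      ∀ᶠ μ : ℝ in 𝓝[>] 1, segment ℝ b (b + μ • (y - b)) ⊆ P := by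
    have hcont : Continuous fun μ : ℝ => (b, b + μ • (y - b)) := by fun_prop
    exact nhdsWithin_le_nhds (hcont.continuousAt
      ((isOpen_setOf_segment_subset hP).mem_nhds (by simpa using hy)))
  obtain ⟨μ, hμa, hμc, hμ : 1 < μ⟩ :=
    ((henlarge hba).and ((henlarge hbc).and self_mem_nhdsWithin)).exists
  have hμ0 : 0 < μ := one_pos.trans hμ
  rintro _ ⟨s, t, hs, ht, hst, rfl⟩
  have hlt : s / μ + t / μ < 1 := by rwa [← add_div, hst, div_lt_one hμ0]
  convert add_smul_sub_add_smul_sub_mem_zeroFreeBase hre hQ hH (hμa.trans hPQ) (hμc.trans hPQ)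
    (div_nonneg hs hμ0.le) (div_nonneg ht hμ0.le) hlt using 1
  obtain rfl : s = 1 - t := by linarith
  simp only [add_sub_cancel_left, smul_smul, div_mul_cancel₀ _ hμ0.ne']
  module

theorem segment_subset_interior_zeroFreeBase (hre : IsRealPart re) (hQ : Convex ℝ Q)
    (hH : DifferentiableOn ℂ H (re ⁻¹' Q)) (hP : IsOpen P) (hPQ : P ⊆ zeroFreeBase re H Q)
    {a b c : E} (hba : segment ℝ b a ⊆ P) (hbc : segment ℝ b c ⊆ P) :
    segment ℝ a c ⊆ interior (zeroFreeBase re H Q) := by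
  rintro x ⟨s, t, hs, ht, hst, hx⟩
  have htranslate {y : E} (hy : segment ℝ b y ⊆ P) :
      ∀ᶠ x' in 𝓝 x, segment ℝ b (y + (x' - x)) ⊆ P := by
    have hcont : Continuous fun x' => (b, y + (x' - x)) := by fun_prop
    exact hcont.continuousAt ((isOpen_setOf_segment_subset hP).mem_nhds (by simpa using hy))
  rw [mem_interior_iff_mem_nhds]
  filter_upwards [htranslate hba, htranslate hbc] with x' hba' hbc'
  refine segment_subset_zeroFreeBase hre hQ hH hP hPQ hba' hbc' ⟨s, t, hs, ht, hst, ?_⟩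
  rw [smul_add, smul_add, add_add_add_comm, hx, ← add_smul, hst, one_smul, add_sub_cancel]

variable [LocallyConvexSpace ℝ E]

theorem convexHull_subset_zeroFreeBase (hre : IsRealPart re) (hQ : Convex ℝ Q)
    (hH : DifferentiableOn ℂ H (re ⁻¹' Q)) {U : Set E} (hU : IsOpen U) (hconn : IsPreconnected U)
    (hUQ : U ⊆ zeroFreeBase re H Q) : convexHull ℝ U ⊆ zeroFreeBase re H Q := by
  rcases U.eq_empty_or_nonempty with rfl | ⟨x₀, hx₀⟩
  · simp
  set P := connectedComponentIn (interior (zeroFreeBase re H Q)) x₀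
  have hPopen : IsOpen P := isOpen_interior.connectedComponentIn
  have hPsub : P ⊆ zeroFreeBase re H Q :=
    (connectedComponentIn_subset _ _).trans interior_subset
  have hUP : U ⊆ P := hconn.subset_connectedComponentIn hx₀ (interior_maximal hUQ hU)
  have hPconv : Convex ℝ P := by
    refine convex_of_forall_segment_subset hPopen isPreconnected_connectedComponentIn ?_
    intro a b c hba hbc
    have hac := segment_subset_interior_zeroFreeBase hre hQ hH hPopen hPsub hba hbc
    have hPa : P = connectedComponentIn (interior (zeroFreeBase re H Q)) a :=
      connectedComponentIn_eq (hba (right_mem_segment ℝ b a))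
    rw [hPa]
    exact (convex_segment a c).isPreconnected.subset_connectedComponentIn
      (left_mem_segment ℝ a c) hac
  exact (convexHull_min hUP hPconv).trans hPsub

theorem ne_zero_on_tube_convexHull (hre : IsRealPart re) {U : Set E} (hU : IsOpen U)
    (hconn : IsPreconnected U) (hH : DifferentiableOn ℂ H (re ⁻¹' convexHull ℝ U))
    (hne : ∀ z, re z ∈ U → H z ≠ 0) {z : Z} (hz : re z ∈ convexHull ℝ U) : H z ≠ 0 :=
  (convexHull_subset_zeroFreeBase hre (convex_convexHull ℝ U) hH hU hconn
    (fun _ hx => ⟨subset_convexHull ℝ U hx, fun w hw => hne w (hw ▸ hx)⟩) hz).2 z rfl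

theorem statement7_general (hre : IsRealPart re) {U : Set E} (hU : IsOpen U)
    (hconn : IsPreconnected U) {g h : Z → ℂ} (hg : DifferentiableOn ℂ g (re ⁻¹' convexHull ℝ U))
    (hh : DifferentiableOn ℂ h (re ⁻¹' convexHull ℝ U)) (hle : ∀ z, re z ∈ U → ‖g z‖ ≤ ‖h z‖)
    (hne : ∀ z, re z ∈ U → h z ≠ 0) {z : Z} (hz : re z ∈ convexHull ℝ U) : ‖g z‖ ≤ ‖h z‖ := by
  have hhz : h z ≠ 0 := ne_zero_on_tube_convexHull hre hU hconn hh hne hz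
  by_contra! hlt
  have hratio : 1 < ‖g z / h z‖ := by rwa [norm_div, one_lt_div (norm_pos_iff.2 hhz)]
  refine ne_zero_on_tube_convexHull hre hU hconn (H := fun w => g z / h z * h w - g w)
    ((hh.const_mul _).sub hg) (fun w hw hzero => ?_) hz (by simp [hhz])
  have hgw : ‖g w‖ = ‖g z / h z‖ * ‖h w‖ := by rw [← sub_eq_zero.1 hzero, norm_mul]
  have hhw : ‖h w‖ < ‖g w‖ := hgw ▸ lt_mul_of_one_lt_left (norm_pos_iff.2 (hne w hw)) hratio
  exact hhw.not_ge (hle w hw)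

end Topological

theorem isRealPart_compLeft_reLm (ι : Type*) [Fintype ι] :
    IsRealPart (Complex.reLm.compLeft ι) := fun x =>
  ⟨fun i => x i, by ext; simp, by ext; simp⟩

end TubeDomains

/-- extension of the inequality `|g| ≤ |h|` from a tube domain to the tube over
the convex hull of its base, for `h` nonvanishing on the original tube. -/
theorem statement7
    (n : ℕ) (hn : 1 ≤ n)
    (U : Set (Fin n → ℝ)) (hUopen : IsOpen U) (hUconn : IsConnected U)
    (g h : (Fin n → ℂ) → ℂ)
    (hg : DifferentiableOn ℂ g {z : Fin n → ℂ | (fun i => (z i).re) ∈ convexHull ℝ U})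
    (hh : DifferentiableOn ℂ h {z : Fin n → ℂ | (fun i => (z i).re) ∈ convexHull ℝ U})
    (hle : ∀ z : Fin n → ℂ, (fun i => (z i).re) ∈ U → ‖g z‖ ≤ ‖h z‖)
    (hne : ∀ z : Fin n → ℂ, (fun i => (z i).re) ∈ U → h z ≠ 0) :
    ∀ z : Fin n → ℂ, (fun i => (z i).re) ∈ convexHull ℝ U → ‖g z‖ ≤ ‖h z‖ := fun _ hz =>
  statement7_general (isRealPart_compLeft_reLm (Fin n)) hUopen hUconn.isPreconnected
    hg hh hle hne hz
end

section
/- Let U₁, U₂ ⊆ ℝ² be bounded open connected sets with U₁ ∩ U₂ ≠ ∅, let T₁, T₂ ⊆ ℂ² be the tube domains over U₁, U₂, and let T be the tube domain over the convex hull of U₁ ∪ U₂. Let g be holomorphic on T and suppose that for every ε > 0 there is C > 0 such that |g(s,w)| ≤ C·exp(ε·(|Im s| + |Im w|)) for all (s,w) ∈ T₁ ∪ T₂. Then for every ε > 0 there is C′ > 0 such that |g(s,w)| ≤ C′·exp(ε·(|Im s| + |Im w|)) for all (s,w) ∈ T. -/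
open Complex

/-!
Maximum principle for tubes: a holomorphic function on the tube over the convex hull of a connected
open set `D` that is bounded by `M` on the tube over `D` is bounded by `M` everywhere. If `D`
contains two sides `[b, a]` and `[b, c]` of a triangle, the parabolas
`ζ ↦ b + ζ (a - b) + (1 - ζ) (1 - β ζ) (c - b)` sweep out its interior as `β > 0` varies, and each
carries a bounded region whose boundary lies over the two sides, so the one-variable maximum
principle bounds the function over the triangle. Any two points of `D` are joined by a chain of
segments in `D`, and filling in triangles along such chains exhausts the convex hull.

For functions of subexponential growth, apply this to `g` times the Gaussian `exp (∑ (zᵢ - i tᵢ)²)`,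
where `t` is the imaginary part of the point at which `g` is to be estimated: over the bounded set
`D` the Gaussian absorbs `exp (ε |Im zᵢ|)` at the cost of a factor `exp (ε |tᵢ|)` and a constant.
-/

open Set Filter Topology

section Visibility

variable {E : Type*} [AddCommGroup E] [Module ℝ E]

/-- The set of points that `S` sees from `b`, that is, those joined to `b` by a segment lying
in `S`. -/
def visibleFrom (S : Set E) (b : E) : Set E := {x | segment ℝ b x ⊆ S}

theorem visibleFrom_subset (S : Set E) (b : E) : visibleFrom S b ⊆ S :=
  fun x hx => hx (right_mem_segment ℝ b x)

theorem mem_visibleFrom_comm {S : Set E} {a b : E} : a ∈ visibleFrom S b ↔ b ∈ visibleFrom S a := by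
  simp only [visibleFrom, mem_ofPred_eq, segment_symm ℝ a b]

theorem subset_visibleFrom_of_convex {S T : Set E} (hT : Convex ℝ T) (hTS : T ⊆ S) {b : E}
    (hb : b ∈ T) : T ⊆ visibleFrom S b :=
  fun _ hx => (hT.segment_subset hb hx).trans hTS

theorem convexHull_subset_of_convex_visibleFrom [TopologicalSpace E] [IsTopologicalAddGroup E]
    [ContinuousSMul ℝ E] [LocallyConvexSpace ℝ E] {S D : Set E}
    (hS : ∀ b, Convex ℝ (visibleFrom S b)) (hD : IsOpen D) (hDc : IsPreconnected D) (hDS : D ⊆ S) :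
    convexHull ℝ D ⊆ S := by
  rcases D.eq_empty_or_nonempty with rfl | ⟨a, ha⟩
  · simp only [convexHull_empty, empty_subset]
  suffices D ⊆ visibleFrom S a from
    (convexHull_min this (hS a)).trans (visibleFrom_subset S a)
  intro b hb
  refine hDc.induction₂ (fun x y => y ∈ visibleFrom S x) (fun x hx => ?_)
    (fun x y z _ _ _ hxy hyz => ?_) (fun _ _ _ _ => mem_visibleFrom_comm.1) ha hb
  · obtain ⟨T, ⟨hTx, hT⟩, hTD⟩ :=
      (LocallyConvexSpace.convex_basis (𝕜 := ℝ) x).mem_iff.1 (hD.mem_nhds hx)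
    exact mem_nhdsWithin_of_mem_nhds <|
      mem_of_superset hTx
        (subset_visibleFrom_of_convex hT (hTD.trans hDS) (mem_of_mem_nhds hTx))
  · exact ((hS y).segment_subset (mem_visibleFrom_comm.1 hxy) hyz).trans (visibleFrom_subset S y)

end Visibility

section Triangle

variable {V : Type*} [NormedAddCommGroup V] [NormedSpace ℂ V]

/-- The standard triangle in `ℝ²`, with vertices `(0, 0)`, `(1, 0)` and `(0, 1)`. -/
def stdTriangle : Set (ℝ × ℝ) := {x | 0 ≤ x.1 ∧ 0 ≤ x.2 ∧ x.1 + x.2 ≤ 1}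

section Affine

variable {E : Type*} [AddCommGroup E] [Module ℝ E] {a b c : E}

theorem exists_mem_stdTriangle_of_mem_segment {p q : E} (hp : p ∈ segment ℝ a c)
    (hq : q ∈ segment ℝ b p) : ∃ x ∈ stdTriangle, b + x.1 • (a - b) + x.2 • (c - b) = q := by
  obtain ⟨s, t, hs, ht, hst, rfl⟩ := hp
  rw [segment_eq_image'] at hq
  obtain ⟨r, ⟨hr0, hr1⟩, rfl⟩ := hq
  refine ⟨(r * s, r * t), ⟨mul_nonneg hr0 hs, mul_nonneg hr0 ht, ?_⟩, ?_⟩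
  · simpa only [← mul_add, hst, mul_one] using hr1
  · obtain rfl : t = 1 - s := by linarith
    module

theorem add_smul_sub_add_smul_sub_mem_s8 {C : Set E} (hC : Convex ℝ C) (ha : a ∈ C) (hb : b ∈ C)
    (hc : c ∈ C) {x : ℝ × ℝ} (hx : x ∈ stdTriangle) : b + x.1 • (a - b) + x.2 • (c - b) ∈ C := by
  obtain ⟨h₁, h₂, h₁₂⟩ := hx
  have hmem : ∑ i, ![1 - x.1 - x.2, x.1, x.2] i • ![b, a, c] i ∈ C :=
    hC.sum_mem (by simpa [Fin.forall_fin_succ, h₁, h₂] using by linarith)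
      (by simp only [Fin.sum_univ_three, Matrix.cons_val]; ring)
      (by simp [Fin.forall_fin_succ, ha, hb, hc])
  convert hmem using 1
  simp only [Fin.sum_univ_three, Matrix.cons_val]
  module

theorem add_smul_sub_add_smul_sub_mem_of_mul_eq_zero {S : Set E} (ha : segment ℝ b a ⊆ S)
    (hc : segment ℝ b c ⊆ S) {x : ℝ × ℝ} (hx : x ∈ stdTriangle) (hzero : x.1 * x.2 = 0) :
    b + x.1 • (a - b) + x.2 • (c - b) ∈ S := by
  obtain ⟨h₁, h₂, h₁₂⟩ := hx
  rw [segment_eq_image'] at ha hc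
  rcases mul_eq_zero.1 hzero with h | h
  · exact hc ⟨x.2, ⟨h₂, by linarith⟩, by simp only [h, zero_smul, add_zero]⟩
  · exact ha ⟨x.1, ⟨h₁, by linarith⟩, by simp only [h, zero_smul, add_zero]⟩

end Affine

/-- The polynomial whose graph over `ℂ` is the analytic disc of the triangle argument. For `β > 0`
its real part vanishes on a curve through `1`, which together with the imaginary axis bounds
`parabolaRegion β`. -/
noncomputable def parabola (β : ℝ) (ζ : ℂ) : ℂ := (1 - ζ) * (1 - β * ζ)

/-- The part of the strip `0 < Re ζ < 1` over which `parabola β` has positive real part. -/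
def parabolaRegion (β : ℝ) : Set ℂ := {ζ | 0 < ζ.re ∧ ζ.re < 1 ∧ 0 < (parabola β ζ).re}

theorem parabola_re (β : ℝ) (ζ : ℂ) :
    (parabola β ζ).re = (1 - ζ.re) * (1 - β * ζ.re) - β * ζ.im ^ 2 := by
  simp only [parabola, mul_re, sub_re, sub_im, one_re, one_im, ofReal_re, ofReal_im, mul_im]
  ring

@[fun_prop]
theorem differentiable_parabola (β : ℝ) : Differentiable ℂ (parabola β) := by
  unfold parabola
  fun_prop

theorem isOpen_parabolaRegion (β : ℝ) : IsOpen (parabolaRegion β) := by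
  have hcont : Continuous (parabola β) := (differentiable_parabola β).continuous
  exact (isOpen_lt continuous_const continuous_re).inter <|
    (isOpen_lt continuous_re continuous_const).inter <|
      isOpen_lt continuous_const (continuous_re.comp hcont)

theorem closure_parabolaRegion_subset (β : ℝ) :
    closure (parabolaRegion β) ⊆ {ζ | 0 ≤ ζ.re ∧ ζ.re ≤ 1 ∧ 0 ≤ (parabola β ζ).re} := by
  have hcont : Continuous (parabola β) := (differentiable_parabola β).continuous
  refine closure_minimal (fun ζ hζ => ⟨hζ.1.le, hζ.2.1.le, hζ.2.2.le⟩) ?_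
  exact (isClosed_le continuous_const continuous_re).inter <|
    (isClosed_le continuous_re continuous_const).inter <|
      isClosed_le continuous_const (continuous_re.comp hcont)

theorem mem_stdTriangle_of_mem_closure_parabolaRegion {β : ℝ} (hβ : 0 ≤ β) {ζ : ℂ}
    (hζ : ζ ∈ closure (parabolaRegion β)) : (ζ.re, (parabola β ζ).re) ∈ stdTriangle := by
  obtain ⟨h0, h1, hpos⟩ := closure_parabolaRegion_subset β hζ
  refine ⟨h0, hpos, ?_⟩
  have hβζ : 0 ≤ (1 - ζ.re) * (β * ζ.re) := mul_nonneg (sub_nonneg.2 h1) (mul_nonneg hβ h0)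
  have hβi : 0 ≤ β * ζ.im ^ 2 := by positivity
  linarith [parabola_re β ζ]

theorem mul_eq_zero_of_mem_frontier_parabolaRegion {β : ℝ} (hβ : 0 ≤ β) {ζ : ℂ}
    (hζ : ζ ∈ frontier (parabolaRegion β)) : ζ.re * (parabola β ζ).re = 0 := by
  rw [(isOpen_parabolaRegion β).frontier_eq] at hζ
  obtain ⟨h0, hpos, hsum⟩ := mem_stdTriangle_of_mem_closure_parabolaRegion hβ hζ.1
  by_contra hne
  obtain ⟨hne0, hnepos⟩ := mul_ne_zero_iff.1 hne
  have hpos' : 0 < (parabola β ζ).re := lt_of_le_of_ne' hpos hnepos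
  exact hζ.2 ⟨lt_of_le_of_ne' h0 hne0, by linarith, hpos'⟩

theorem isBounded_parabolaRegion {β : ℝ} (hβ : 0 < β) :
    Bornology.IsBounded (parabolaRegion β) := by
  refine isBounded_iff_forall_norm_le.2 ⟨1 + √(1 / β), fun ζ ⟨h0, h1, hpos⟩ => ?_⟩
  have him : ζ.im ^ 2 ≤ 1 / β := by
    rw [le_div_iff₀ hβ]
    have hβζ : 0 ≤ (1 - ζ.re) * (β * ζ.re) :=
      mul_nonneg (sub_nonneg.2 h1.le) (mul_nonneg hβ.le h0.le)
    linarith [parabola_re β ζ]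
  calc ‖ζ‖ ≤ |ζ.re| + |ζ.im| := norm_le_abs_re_add_abs_im ζ
    _ ≤ 1 + √(1 / β) := add_le_add (abs_le.2 ⟨by linarith, h1.le⟩) (Real.abs_le_sqrt him)

theorem exists_parabola_eq {x y : ℝ} (hx : 0 < x) (hy : 0 < y) (hxy : x + y < 1) :
    ∃ β > 0, parabola β x = y ∧ (x : ℂ) ∈ parabolaRegion β := by
  have hx1 : 0 < 1 - x := by linarith
  have hβ : parabola ((1 - x - y) / (x * (1 - x))) x = y := by
    unfold parabola
    norm_cast
    field_simp
    ring
  refine ⟨(1 - x - y) / (x * (1 - x)), div_pos (by linarith) (by positivity), hβ, ?_⟩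
  exact ⟨hx, by simpa only [ofReal_re] using sub_pos.1 hx1, by simpa only [hβ, ofReal_re] using hy⟩

variable {F : ℂ × ℂ → V} {M : ℝ}

theorem norm_le_of_tube_interior_stdTriangle
    (hF : ∀ p : ℂ × ℂ, (p.1.re, p.2.re) ∈ stdTriangle → DifferentiableAt ℂ F p)
    (hM : ∀ p : ℂ × ℂ, (p.1.re, p.2.re) ∈ stdTriangle → p.1.re * p.2.re = 0 → ‖F p‖ ≤ M)
    {x y : ℝ} (hx : 0 < x) (hy : 0 < y) (hxy : x + y < 1) : ‖F (x, y)‖ ≤ M := by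
  obtain ⟨β, hβ, hβx, hmem⟩ := exists_parabola_eq hx hy hxy
  have hdiff : DifferentiableOn ℂ (fun ζ => F (ζ, parabola β ζ)) (closure (parabolaRegion β)) :=
    fun ζ hζ => DifferentiableAt.differentiableWithinAt <|
      (hF (ζ, parabola β ζ) (mem_stdTriangle_of_mem_closure_parabolaRegion hβ.le hζ)).comp ζ
        (by fun_prop)
  simpa only [hβx] using norm_le_of_forall_mem_frontier_norm_le (isBounded_parabolaRegion hβ)
    hdiff.diffContOnCl (fun ζ hζ => hM _
      (mem_stdTriangle_of_mem_closure_parabolaRegion hβ.le (frontier_subset_closure hζ))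
      (mul_eq_zero_of_mem_frontier_parabolaRegion hβ.le hζ)) (subset_closure hmem)

theorem norm_le_of_tube_stdTriangle
    (hF : ∀ p : ℂ × ℂ, (p.1.re, p.2.re) ∈ stdTriangle → DifferentiableAt ℂ F p)
    (hM : ∀ p : ℂ × ℂ, (p.1.re, p.2.re) ∈ stdTriangle → p.1.re * p.2.re = 0 → ‖F p‖ ≤ M)
    {x y : ℝ} (hxy : (x, y) ∈ stdTriangle) : ‖F (x, y)‖ ≤ M := by
  rcases eq_or_ne (x * y) 0 with hzero | hne
  · exact hM (x, y) hxy hzero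
  obtain ⟨hne_x, hne_y⟩ := mul_ne_zero_iff.1 hne
  have hx : 0 < x := lt_of_le_of_ne' hxy.1 hne_x
  have hy : 0 < y := lt_of_le_of_ne' hxy.2.1 hne_y
  -- Shrinking towards the origin moves points off the hypotenuse, which no parabola reaches.
  have hcont : ContinuousAt (fun r : ℝ => ‖F ((r * x : ℝ), (r * y : ℝ))‖) 1 := by
    refine (ContinuousAt.comp (g := F) ?_ (by fun_prop)).norm
    simpa only [one_mul] using (hF (x, y) hxy).continuousAt
  have hbound : ∀ᶠ r in 𝓝[<] (1 : ℝ), ‖F ((r * x : ℝ), (r * y : ℝ))‖ ≤ M := by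
    filter_upwards [Ioo_mem_nhdsLT one_pos] with r hr
    refine norm_le_of_tube_interior_stdTriangle hF hM (mul_pos hr.1 hx) (mul_pos hr.1 hy) ?_
    nlinarith [hr.2, hxy.2.2]
  simpa only [one_mul] using le_of_tendsto (hcont.tendsto.mono_left nhdsWithin_le_nhds) hbound

end Triangle

section Tube

variable {ι : Type*} [Fintype ι] {E : Type*} [AddCommGroup E] [Module ℝ E] [TopologicalSpace E]
  {W : Type*} [NormedAddCommGroup W] [NormedSpace ℂ W]
  {V : Type*} [NormedAddCommGroup V] [NormedSpace ℂ V]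
  {ρ : W →L[ℝ] E}

/-- `ρ` behaves like the real part map `ℂⁿ → ℝⁿ`: each `v` is the image of a vector `w` that is
real, in the sense that `ρ (ζ • w) = Re ζ • v` for all complex `ζ`. The tube over `D ⊆ E` is then
`ρ ⁻¹' D`. -/
def IsRealPartMap (ρ : W →L[ℝ] E) : Prop := ∀ v, ∃ w, ∀ ζ : ℂ, ρ (ζ • w) = ζ.re • v

theorem isRealPartMap_prodMap_reCLM : IsRealPartMap (reCLM.prodMap reCLM) := fun v =>
  ⟨(v.1, v.2), fun ζ => by ext <;> simp⟩

namespace IsRealPartMap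

theorem convex_visibleFrom (hρ : IsRealPartMap ρ) {f : W → V} {C : Set E} (hCo : IsOpen C)
    (hC : Convex ℝ C) (hf : DifferentiableOn ℂ f (ρ ⁻¹' C)) (M : ℝ) (b : E) :
    Convex ℝ (visibleFrom {x ∈ C | ∀ z, ρ z = x → ‖f z‖ ≤ M} b) := by
  refine convex_iff_segment_subset.2 fun a ha c hc p hp q hq => ?_
  obtain ⟨x, hx, rfl⟩ := exists_mem_stdTriangle_of_mem_segment hp hq
  have haC : a ∈ C := (visibleFrom_subset _ b ha).1
  have hbC : b ∈ C := (ha (left_mem_segment ℝ b a)).1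
  have hcC : c ∈ C := (visibleFrom_subset _ b hc).1
  refine ⟨add_smul_sub_add_smul_sub_mem_s8 hC haC hbC hcC hx, fun z hz => ?_⟩
  obtain ⟨u, hu⟩ := hρ (a - b)
  obtain ⟨w, hw⟩ := hρ (c - b)
  let Φ : ℂ × ℂ → W := fun p => z + (p.1 - x.1) • u + (p.2 - x.2) • w
  have hρΦ : ∀ p : ℂ × ℂ, ρ (Φ p) = b + p.1.re • (a - b) + p.2.re • (c - b) := by
    intro p
    simp only [Φ, map_add, hz, hu, hw, sub_re, ofReal_re]
    module
  have hfΦ : ∀ p : ℂ × ℂ, (p.1.re, p.2.re) ∈ stdTriangle → DifferentiableAt ℂ (f ∘ Φ) p := by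
    intro p hp
    have hΦp : Φ p ∈ ρ ⁻¹' C := by
      rw [mem_preimage, hρΦ]
      exact add_smul_sub_add_smul_sub_mem_s8 hC haC hbC hcC hp
    exact (hf.differentiableAt ((hCo.preimage ρ.continuous).mem_nhds hΦp)).comp p (by fun_prop)
  have hbound := norm_le_of_tube_stdTriangle hfΦ (fun p hp hzero =>
    (add_smul_sub_add_smul_sub_mem_of_mul_eq_zero ha hc hp hzero).2 (Φ p) (hρΦ p)) hx
  simpa only [Φ, Function.comp_apply, sub_self, zero_smul, add_zero] using hbound

theorem norm_le_of_mem_convexHull [IsTopologicalAddGroup E] [ContinuousSMul ℝ E]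
    [LocallyConvexSpace ℝ E] (hρ : IsRealPartMap ρ) {D : Set E} (hD : IsOpen D)
    (hDc : IsPreconnected D) {f : W → V} (hf : DifferentiableOn ℂ f (ρ ⁻¹' convexHull ℝ D)) {M : ℝ}
    (hM : ∀ z, ρ z ∈ D → ‖f z‖ ≤ M) {z : W} (hz : ρ z ∈ convexHull ℝ D) : ‖f z‖ ≤ M := by
  have hvisible := hρ.convex_visibleFrom hD.convexHull (convex_convexHull ℝ D) hf M
  have hDS : D ⊆ {x ∈ convexHull ℝ D | ∀ z, ρ z = x → ‖f z‖ ≤ M} := fun x hx =>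
    ⟨subset_convexHull ℝ D hx, fun z hzx => hM z (hzx ▸ hx)⟩
  exact (convexHull_subset_of_convex_visibleFrom hvisible hD hDc hDS hz).2 z rfl

end IsRealPartMap

/-- The Gaussian in the complex coordinates `ℓ i`, centred at the point with coordinates `i tᵢ`. It
decays superexponentially in the imaginary directions of a tube. -/
noncomputable def gaussianAt (ℓ : ι → W →L[ℂ] ℂ) (t : ι → ℝ) (z : W) : ℂ :=
  cexp (∑ i, (ℓ i z - t i * I) ^ 2)

@[fun_prop]
theorem differentiable_gaussianAt (ℓ : ι → W →L[ℂ] ℂ) (t : ι → ℝ) :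
    Differentiable ℂ (gaussianAt ℓ t) := by
  unfold gaussianAt
  fun_prop

theorem norm_gaussianAt (ℓ : ι → W →L[ℂ] ℂ) (t : ι → ℝ) (z : W) :
    ‖gaussianAt ℓ t z‖ = Real.exp (∑ i, ((ℓ i z).re ^ 2 - ((ℓ i z).im - t i) ^ 2)) := by
  simp [gaussianAt, norm_exp, pow_two]

theorem one_le_norm_gaussianAt_im (ℓ : ι → W →L[ℂ] ℂ) (z : W) :
    1 ≤ ‖gaussianAt ℓ (fun i => (ℓ i z).im) z‖ := by
  rw [norm_gaussianAt]
  exact Real.one_le_exp (Finset.sum_nonneg fun i _ => by simpa using sq_nonneg _)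

theorem mul_abs_sub_sq_le {ε : ℝ} (hε : 0 ≤ ε) (y t : ℝ) :
    ε * |y| - (y - t) ^ 2 ≤ ε * |t| + ε ^ 2 / 4 := by
  have htri : ε * |y| ≤ ε * (|t| + |y - t|) := by
    gcongr
    simpa using abs_add_le t (y - t)
  rw [← sq_abs (y - t)]
  linarith [sq_nonneg (|y - t| - ε / 2)]

theorem exp_mul_norm_gaussianAt_le {ℓ : ι → W →L[ℂ] ℂ} {R ε : ℝ} (hε : 0 ≤ ε) {z : W}
    (hR : ∀ i, |(ℓ i z).re| ≤ R) (t : ι → ℝ) :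
    Real.exp (ε * ∑ i, |(ℓ i z).im|) * ‖gaussianAt ℓ t z‖ ≤
      Real.exp (Fintype.card ι * (R ^ 2 + ε ^ 2 / 4)) * Real.exp (ε * ∑ i, |t i|) := by
  rw [norm_gaussianAt, ← Real.exp_add, ← Real.exp_add, Real.exp_le_exp, Finset.mul_sum,
    Finset.mul_sum, ← Finset.sum_add_distrib]
  calc ∑ i, (ε * |(ℓ i z).im| + ((ℓ i z).re ^ 2 - ((ℓ i z).im - t i) ^ 2))
      ≤ ∑ i, ((R ^ 2 + ε ^ 2 / 4) + ε * |t i|) := by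
        refine Finset.sum_le_sum fun i _ => ?_
        have hre : (ℓ i z).re ^ 2 ≤ R ^ 2 := sq_le_sq' (abs_le.1 (hR i)).1 (abs_le.1 (hR i)).2
        linarith [mul_abs_sub_sq_le hε (ℓ i z).im (t i)]
    _ = Fintype.card ι * (R ^ 2 + ε ^ 2 / 4) + ∑ i, ε * |t i| := by
        rw [Finset.sum_add_distrib, Finset.sum_const, Finset.card_univ, nsmul_eq_mul]

theorem IsRealPartMap.norm_le_mul_exp_of_mem_convexHull [IsTopologicalAddGroup E]
    [ContinuousSMul ℝ E] [LocallyConvexSpace ℝ E] (hρ : IsRealPartMap ρ) {D : Set E}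
    (hD : IsOpen D) (hDc : IsPreconnected D) {ℓ : ι → W →L[ℂ] ℂ} {R : ℝ}
    (hR : ∀ z, ρ z ∈ D → ∀ i, |(ℓ i z).re| ≤ R) {g : W → V}
    (hg : DifferentiableOn ℂ g (ρ ⁻¹' convexHull ℝ D)) {ε C : ℝ} (hε : 0 ≤ ε) (hC : 0 ≤ C)
    (hbd : ∀ z, ρ z ∈ D → ‖g z‖ ≤ C * Real.exp (ε * ∑ i, |(ℓ i z).im|)) {z : W}
    (hz : ρ z ∈ convexHull ℝ D) :
    ‖g z‖ ≤ C * Real.exp (Fintype.card ι * (R ^ 2 + ε ^ 2 / 4)) *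
      Real.exp (ε * ∑ i, |(ℓ i z).im|) := by
  let k : W → ℂ := gaussianAt ℓ fun i => (ℓ i z).im
  have hk : Differentiable ℂ k := differentiable_gaussianAt _ _
  have hbound : ∀ w, ρ w ∈ D → ‖k w • g w‖ ≤ C * Real.exp (Fintype.card ι * (R ^ 2 + ε ^ 2 / 4)) *
      Real.exp (ε * ∑ i, |(ℓ i z).im|) := fun w hw =>
    calc ‖k w • g w‖ = ‖g w‖ * ‖k w‖ := by rw [norm_smul, mul_comm]
      _ ≤ C * Real.exp (ε * ∑ i, |(ℓ i w).im|) * ‖k w‖ := by gcongr; exact hbd w hw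
      _ ≤ _ := by
        rw [mul_assoc, mul_assoc]
        exact mul_le_mul_of_nonneg_left (exp_mul_norm_gaussianAt_le hε (hR w hw) _) hC
  calc ‖g z‖ ≤ ‖k z‖ * ‖g z‖ :=
        le_mul_of_one_le_left (norm_nonneg _) (one_le_norm_gaussianAt_im ℓ z)
    _ = ‖k z • g z‖ := (norm_smul _ _).symm
    _ ≤ _ := hρ.norm_le_of_mem_convexHull hD hDc (hk.differentiableOn.smul hg) hbound hz

theorem statement8_general [IsTopologicalAddGroup E] [ContinuousSMul ℝ E] [LocallyConvexSpace ℝ E]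
    (hρ : IsRealPartMap ρ) {D : Set E} (hD : IsOpen D) (hDc : IsPreconnected D)
    (hDb : Bornology.IsVonNBounded ℝ D) {l : ι → E →L[ℝ] ℝ} {ℓ : ι → W →L[ℂ] ℂ}
    (hℓ : ∀ i z, (ℓ i z).re = l i (ρ z)) {g : W → V}
    (hg : DifferentiableOn ℂ g (ρ ⁻¹' convexHull ℝ D))
    (hbd : ∀ ε : ℝ, 0 < ε → ∃ C : ℝ, 0 < C ∧ ∀ z, ρ z ∈ D →
      ‖g z‖ ≤ C * Real.exp (ε * ∑ i, |(ℓ i z).im|)) :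
    ∀ ε : ℝ, 0 < ε → ∃ C' : ℝ, 0 < C' ∧ ∀ z, ρ z ∈ convexHull ℝ D →
      ‖g z‖ ≤ C' * Real.exp (ε * ∑ i, |(ℓ i z).im|) := by
  have hlD : Bornology.IsBounded (ContinuousLinearMap.pi l '' D) :=
    (NormedSpace.isVonNBounded_iff ℝ).1 (hDb.image (ContinuousLinearMap.pi l))
  obtain ⟨R, hR⟩ := hlD.exists_norm_le
  intro ε hε
  obtain ⟨C, hC, hgC⟩ := hbd ε hε
  refine ⟨C * Real.exp (Fintype.card ι * (R ^ 2 + ε ^ 2 / 4)), by positivity, fun z hz => ?_⟩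
  refine hρ.norm_le_mul_exp_of_mem_convexHull hD hDc (fun w hw i => ?_) hg hε.le hC.le hgC hz
  rw [hℓ i w]
  exact (norm_le_pi_norm (ContinuousLinearMap.pi l (ρ w)) i).trans (hR _ (mem_image_of_mem _ hw))

end Tube

/-- a function of sub-exponential growth on two overlapping bounded tube domains,
holomorphic on the tube over the convex hull of the union of their bases, has sub-exponential
growth on that larger tube. -/
theorem statement8
    (U₁ U₂ : Set (ℝ × ℝ))
    (hU₁o : IsOpen U₁) (hU₁c : IsConnected U₁) (hU₁b : Bornology.IsBounded U₁)
    (hU₂o : IsOpen U₂) (hU₂c : IsConnected U₂) (hU₂b : Bornology.IsBounded U₂)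
    (hinter : (U₁ ∩ U₂).Nonempty)
    (g : ℂ × ℂ → ℂ)
    (hg : DifferentiableOn ℂ g {p : ℂ × ℂ | (p.1.re, p.2.re) ∈ convexHull ℝ (U₁ ∪ U₂)})
    (hbd : ∀ ε : ℝ, 0 < ε → ∃ C : ℝ, 0 < C ∧ ∀ p : ℂ × ℂ,
      (p.1.re, p.2.re) ∈ U₁ ∪ U₂ →
        ‖g p‖ ≤ C * Real.exp (ε * (|p.1.im| + |p.2.im|))) :
    ∀ ε : ℝ, 0 < ε → ∃ C' : ℝ, 0 < C' ∧ ∀ p : ℂ × ℂ,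
      (p.1.re, p.2.re) ∈ convexHull ℝ (U₁ ∪ U₂) →
        ‖g p‖ ≤ C' * Real.exp (ε * (|p.1.im| + |p.2.im|)) := by
  have hgrowth := statement8_general isRealPartMap_prodMap_reCLM (hU₁o.union hU₂o)
    (hU₁c.union hinter hU₂c).isPreconnected
    ((NormedSpace.isVonNBounded_iff ℝ).2 (hU₁b.union hU₂b))
    (l := ![.fst ℝ ℝ ℝ, .snd ℝ ℝ ℝ]) (ℓ := ![.fst ℂ ℂ ℂ, .snd ℂ ℂ ℂ])
    (Fin.forall_fin_two.2 ⟨fun _ => rfl, fun _ => rfl⟩) hg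
  simp only [Fin.sum_univ_two] at hgrowth
  exact hgrowth hbd
end
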